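/- Let n ≥ 2, q = exp(2πi/n), and ℏ ∈ ℂ, and let ⋆ be the product on functions ℤ/nℤ → ℂ[z,w] defined by (F ⋆ G)(m) = Σ_{j=0}^{n−1} Σ_{k+l+j ≡ m} ((iℏ/2)^j/[j]_q!) · D_z^j(F(k)) · σ^j( D_w^j( γ^k(G(l)) ) ). Then F is in the center of this algebra (F ⋆ G = G ⋆ F for all G) if and only if γ(F(0)) = F(0) and, for every 1 ≤ j ≤ n−1, [j]_q! · (1−q⁻¹)^j · w^j · F(j) = (iℏ/2)^j · D_z^j(F(0)). In particular, a central element is completely determined by its γ-invariant component F(0). -/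

import Mathlib

noncomputable section

/-- The `q`-integer `[k]_q = 1 + q + ⋯ + q^(k-1)`. -/
def qint (q : ℂ) (k : ℕ) : ℂ := ∑ i ∈ Finset.range k, q ^ i

/-- The `q`-factorial `[k]_q! = ∏_{i=1}^k [i]_q`. -/
def qfact (q : ℂ) (k : ℕ) : ℂ := ∏ i ∈ Finset.range k, qint q (i + 1)

/-- The polynomial algebra `A = ℂ[z,w]`, realized as `ℂ[w][z]` (outer variable `z`,
inner variable `w`). -/
abbrev PolyZW : Type := Polynomial (Polynomial ℂ)

/-- The algebra automorphism `σ` of `ℂ[z,w]`: `z ↦ q z`, `w ↦ w`. -/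
def sigmaOp (q : ℂ) (f : PolyZW) : PolyZW :=
  f.comp (Polynomial.C (Polynomial.C q) * Polynomial.X)

/-- The algebra automorphism `τ` of `ℂ[z,w]`: `z ↦ z`, `w ↦ q⁻¹ w`
(applied to each `z`-coefficient). -/
def tauOp (q : ℂ) (f : PolyZW) : PolyZW :=
  f.sum fun n p => Polynomial.C (p.comp (Polynomial.C q⁻¹ * Polynomial.X)) * Polynomial.X ^ n

/-- The automorphism `γ = σ ∘ τ` of `ℂ[z,w]`: `z ↦ q z`, `w ↦ q⁻¹ w`. -/
def gammaOp (q : ℂ) (f : PolyZW) : PolyZW := sigmaOp q (tauOp q f)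

/-- The twisted difference operator `D_z f = (f - σ f)/((1-q) z)`; the division by `z` is
exact since `f - σ f` is divisible by `z`. -/
def Dz (q : ℂ) (f : PolyZW) : PolyZW :=
  Polynomial.C (Polynomial.C (1 - q)⁻¹) * (f - sigmaOp q f).divX

/-- The twisted difference operator `D_w f = (f - τ f)/((1-q⁻¹) w)`; the division by `w` is
exact and performed on each `z`-coefficient. -/
def Dw (q : ℂ) (f : PolyZW) : PolyZW :=
  (f - tauOp q f).sum fun n p =>
    Polynomial.C (Polynomial.C (1 - q⁻¹)⁻¹ * p.divX) * Polynomial.X ^ n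

/-- The star product on functions `ℤ/nℤ → ℂ[z,w]` (the underlying space of the complexified
crossed product `S(ℝ²)⋊ℤ_n`):
`(F ⋆ G)(m) = ∑_{j=0}^{n-1} ∑_{k+l+j ≡ m} ((iℏ/2)^j/[j]_q!) D_z^j(F(k)) σ^j(D_w^j(γ^k(G(l))))`. -/
def qstar (n : ℕ) (hbar q : ℂ) (F G : ZMod n → PolyZW) : ZMod n → PolyZW :=
  fun m =>
    ∑ j ∈ Finset.range n, ∑ k ∈ Finset.range n,
      ((Complex.I * hbar / 2) ^ j / qfact q j) •
        ((Dz q)^[j] (F (k : ZMod n)) *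
          (sigmaOp q)^[j] ((Dw q)^[j] ((gammaOp q)^[k]
            (G ((m : ZMod n) - (k : ZMod n) - (j : ZMod n))))))


namespace QStarAux
open Polynomial Finset

lemma sigma_coeff (q : ℂ) (f : PolyZW) (a b : ℕ) :
    ((sigmaOp q f).coeff a).coeff b = q ^ a * (f.coeff a).coeff b := by
  unfold sigmaOp
  rw [comp_C_mul_X_coeff, ← C_pow, coeff_mul_C, mul_comm]

lemma tau_coeff (q : ℂ) (f : PolyZW) (a b : ℕ) :
    ((tauOp q f).coeff a).coeff b = q⁻¹ ^ b * (f.coeff a).coeff b := by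
  have h : (tauOp q f).coeff a = (f.coeff a).comp (C q⁻¹ * X) := by
    unfold tauOp
    rw [Polynomial.sum_def, finsetSum_coeff]
    simp only [coeff_C_mul, coeff_X_pow]
    simp only [mul_ite, mul_one, mul_zero, Finset.sum_ite_eq]
    split_ifs with h
    · rfl
    · rw [notMem_support_iff.mp h]; simp
  rw [h, comp_C_mul_X_coeff, mul_comm]

lemma Dz_coeff (q : ℂ) (f : PolyZW) (a b : ℕ) :
    ((Dz q f).coeff a).coeff b =
      (1 - q)⁻¹ * ((1 - q ^ (a + 1)) * (f.coeff (a + 1)).coeff b) := by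
  unfold Dz
  rw [coeff_C_mul, coeff_C_mul, coeff_divX, coeff_sub, coeff_sub, sigma_coeff]
  ring

lemma Dw_coeff (q : ℂ) (f : PolyZW) (a b : ℕ) :
    ((Dw q f).coeff a).coeff b =
      (1 - q⁻¹)⁻¹ * ((1 - q⁻¹ ^ (b + 1)) * (f.coeff a).coeff (b + 1)) := by
  have h : ∀ g : PolyZW, (g.sum fun n p =>
    Polynomial.C (Polynomial.C (1 - q⁻¹)⁻¹ * p.divX) * Polynomial.X ^ n).coeff a
      = C (1 - q⁻¹)⁻¹ * (g.coeff a).divX := by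
    intro g
    rw [Polynomial.sum_def, finsetSum_coeff]
    simp only [coeff_C_mul, coeff_X_pow]
    simp only [mul_ite, mul_one, mul_zero, Finset.sum_ite_eq]
    split_ifs with h
    · rfl
    · rw [notMem_support_iff.mp h]; simp
  unfold Dw
  rw [h, coeff_C_mul, coeff_divX, coeff_sub, coeff_sub, tau_coeff]
  ring

lemma ext2 {f g : PolyZW} (h : ∀ a b, (f.coeff a).coeff b = (g.coeff a).coeff b) : f = g := by
  ext a b; exact h a b

lemma smul_coeff2 (c : ℂ) (f : PolyZW) (a b : ℕ) :
    ((c • f).coeff a).coeff b = c * (f.coeff a).coeff b := by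
  simp

/-- The variable `w`. -/
def ww : PolyZW := C X
/-- The variable `z`. -/
def zz : PolyZW := X

lemma z_coeff_zero (f : PolyZW) (b : ℕ) : ((zz * f).coeff 0).coeff b = 0 := by
  simp [zz]
lemma z_coeff_succ (f : PolyZW) (a b : ℕ) :
    ((zz * f).coeff (a + 1)).coeff b = (f.coeff a).coeff b := by
  simp [zz]
lemma w_coeff_zero (f : PolyZW) (a : ℕ) : ((ww * f).coeff a).coeff 0 = 0 := by
  simp [ww]
lemma w_coeff_succ (f : PolyZW) (a b : ℕ) :
    ((ww * f).coeff a).coeff (b + 1) = (f.coeff a).coeff b := by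
  simp [ww]
lemma add_coeff2 (f g : PolyZW) (a b : ℕ) :
    ((f + g).coeff a).coeff b = (f.coeff a).coeff b + (g.coeff a).coeff b := by simp
lemma sub_coeff2 (f g : PolyZW) (a b : ℕ) :
    ((f - g).coeff a).coeff b = (f.coeff a).coeff b - (g.coeff a).coeff b := by simp

lemma w_ne : ww ≠ 0 := by simp [ww]

/-- `σ` as a linear map. -/
def sL (q : ℂ) : PolyZW →ₗ[ℂ] PolyZW where
  toFun := sigmaOp q
  map_add' f g := ext2 fun a b => by simp only [sigma_coeff, add_coeff2]; ring
  map_smul' c f := ext2 fun a b => by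
    simp only [sigma_coeff, smul_coeff2, RingHom.id_apply]; ring
/-- `τ` as a linear map. -/
def tL (q : ℂ) : PolyZW →ₗ[ℂ] PolyZW where
  toFun := tauOp q
  map_add' f g := ext2 fun a b => by simp only [tau_coeff, add_coeff2]; ring
  map_smul' c f := ext2 fun a b => by
    simp only [tau_coeff, smul_coeff2, RingHom.id_apply]; ring
/-- `D_z` as a linear map. -/
def zL (q : ℂ) : PolyZW →ₗ[ℂ] PolyZW where
  toFun := Dz q
  map_add' f g := ext2 fun a b => by simp only [Dz_coeff, add_coeff2]; ring
  map_smul' c f := ext2 fun a b => by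
    simp only [Dz_coeff, smul_coeff2, RingHom.id_apply]; ring
/-- `D_w` as a linear map. -/
def wL (q : ℂ) : PolyZW →ₗ[ℂ] PolyZW where
  toFun := Dw q
  map_add' f g := ext2 fun a b => by simp only [Dw_coeff, add_coeff2]; ring
  map_smul' c f := ext2 fun a b => by
    simp only [Dw_coeff, smul_coeff2, RingHom.id_apply]; ring

lemma s_it (q : ℂ) (j : ℕ) (f : PolyZW) : (sigmaOp q)^[j] f = (sL q ^ j) f := by
  rw [Module.End.pow_apply]; rfl
lemma t_it (q : ℂ) (j : ℕ) (f : PolyZW) : (tauOp q)^[j] f = (tL q ^ j) f := by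
  rw [Module.End.pow_apply]; rfl
lemma z_it (q : ℂ) (j : ℕ) (f : PolyZW) : (Dz q)^[j] f = (zL q ^ j) f := by
  rw [Module.End.pow_apply]; rfl
lemma w_it (q : ℂ) (j : ℕ) (f : PolyZW) : (Dw q)^[j] f = (wL q ^ j) f := by
  rw [Module.End.pow_apply]; rfl
lemma g_it (q : ℂ) (j : ℕ) (f : PolyZW) : (gammaOp q)^[j] f = ((sL q * tL q) ^ j) f := by
  rw [Module.End.pow_apply]; rfl

lemma sL_coeff (q : ℂ) (f : PolyZW) (a b : ℕ) :
    ((sL q f).coeff a).coeff b = q ^ a * (f.coeff a).coeff b := sigma_coeff q f a b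
lemma tL_coeff (q : ℂ) (f : PolyZW) (a b : ℕ) :
    ((tL q f).coeff a).coeff b = q⁻¹ ^ b * (f.coeff a).coeff b := tau_coeff q f a b
lemma zL_coeff (q : ℂ) (f : PolyZW) (a b : ℕ) : ((zL q f).coeff a).coeff b =
      (1 - q)⁻¹ * ((1 - q ^ (a + 1)) * (f.coeff (a + 1)).coeff b) := Dz_coeff q f a b
lemma wL_coeff (q : ℂ) (f : PolyZW) (a b : ℕ) : ((wL q f).coeff a).coeff b =
      (1 - q⁻¹)⁻¹ * ((1 - q⁻¹ ^ (b + 1)) * (f.coeff a).coeff (b + 1)) := Dw_coeff q f a b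

lemma comm_st (q : ℂ) : Commute (sL q) (tL q) := by
  refine LinearMap.ext fun f => ext2 fun a b => ?_
  simp only [Module.End.mul_apply, sL_coeff, tL_coeff]; ring
lemma comm_sw (q : ℂ) : Commute (sL q) (wL q) := by
  refine LinearMap.ext fun f => ext2 fun a b => ?_
  simp only [Module.End.mul_apply, sL_coeff, wL_coeff]; ring
lemma comm_tz (q : ℂ) : Commute (tL q) (zL q) := by
  refine LinearMap.ext fun f => ext2 fun a b => ?_
  simp only [Module.End.mul_apply, tL_coeff, zL_coeff]; ring

lemma s_z (q : ℂ) (f : PolyZW) : sL q (zz * f) = q • (zz * sL q f) := by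
  refine ext2 fun a b => ?_
  cases a <;> simp only [sL_coeff, smul_coeff2, z_coeff_zero, z_coeff_succ] <;> ring
lemma s_w (q : ℂ) (f : PolyZW) : sL q (ww * f) = ww * sL q f := by
  refine ext2 fun a b => ?_
  cases b <;> simp only [sL_coeff, w_coeff_zero, w_coeff_succ] <;> ring
lemma t_z (q : ℂ) (f : PolyZW) : tL q (zz * f) = zz * tL q f := by
  refine ext2 fun a b => ?_
  cases a <;> simp only [tL_coeff, z_coeff_zero, z_coeff_succ] <;> ring
lemma t_w (q : ℂ) (f : PolyZW) : tL q (ww * f) = q⁻¹ • (ww * tL q f) := by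
  refine ext2 fun a b => ?_
  cases b <;> simp only [tL_coeff, smul_coeff2, w_coeff_zero, w_coeff_succ] <;> ring
lemma Dz_w (q : ℂ) (f : PolyZW) : zL q (ww * f) = ww * zL q f := by
  refine ext2 fun a b => ?_
  cases b <;> simp only [zL_coeff, w_coeff_zero, w_coeff_succ] <;> ring
lemma Dw_z (q : ℂ) (f : PolyZW) : wL q (zz * f) = zz * wL q f := by
  refine ext2 fun a b => ?_
  cases a <;> simp only [wL_coeff, z_coeff_zero, z_coeff_succ] <;> ring
lemma s_Dz (q : ℂ) (f : PolyZW) : q • sL q (zL q f) = zL q (sL q f) := by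
  refine ext2 fun a b => ?_
  simp only [zL_coeff, smul_coeff2, sL_coeff]; ring
lemma z_Dz (q : ℂ) (h1 : 1 - q ≠ 0) (f : PolyZW) : (1 - q) • (zz * zL q f) = f - sL q f := by
  refine ext2 fun a b => ?_
  cases a <;> simp only [zL_coeff, smul_coeff2, sub_coeff2, sL_coeff, z_coeff_zero, z_coeff_succ]
  · ring
  · field_simp
lemma w_Dw (q : ℂ) (h1 : 1 - q⁻¹ ≠ 0) (f : PolyZW) :
    (1 - q⁻¹) • (ww * wL q f) = f - tL q f := by
  refine ext2 fun a b => ?_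
  cases b <;> simp only [wL_coeff, smul_coeff2, sub_coeff2, tL_coeff, w_coeff_zero, w_coeff_succ]
  · ring
  · rw [← mul_assoc, mul_inv_cancel₀ h1]; ring

lemma Dz_pow_zero (q : ℂ) (n : ℕ) (hn : 1 ≤ n) (hq : q ^ n = 1) (f : PolyZW) :
    (zL q ^ n) f = 0 := by
  have key : ∀ j : ℕ, ∀ a b, (((zL q ^ j) f).coeff a).coeff b =
      (∏ i ∈ range j, ((1 - q)⁻¹ * (1 - q ^ (a + i + 1)))) * (f.coeff (a + j)).coeff b := by
    intro j
    induction j with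
    | zero => intro a b; simp
    | succ j ih =>
      intro a b
      rw [pow_succ', Module.End.mul_apply, zL_coeff, ih, Finset.prod_range_succ']
      have : ∀ i, a + 1 + i + 1 = a + (i + 1) + 1 := by intro i; ring
      simp only [this]
      rw [show a + 1 + j = a + (j + 1) by ring, show a + 0 + 1 = a + 1 by ring]
      ring
  refine ext2 fun a b => ?_
  rw [key]
  have : (∏ i ∈ range n, ((1 - q)⁻¹ * (1 - q ^ (a + i + 1)))) = 0 := by
    have hm : (a + 1) % n < n := Nat.mod_lt _ hn
    have h1 := Nat.div_add_mod (a + 1) n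
    by_cases h0 : (a + 1) % n = 0
    · refine Finset.prod_eq_zero (mem_range.mpr (by omega : 0 < n)) ?_
      rw [show a + 0 + 1 = n * ((a + 1) / n) by omega, pow_mul, hq]; simp
    · refine Finset.prod_eq_zero (mem_range.mpr (by omega : n - (a + 1) % n < n)) ?_
      rw [show a + (n - (a + 1) % n) + 1 = n * ((a + 1) / n) + n by omega,
        pow_add, pow_mul, hq]; simp
  rw [this]; simp

/-! q-numbers -/
lemma qint_zero (q : ℂ) : qint q 0 = 0 := by simp [qint]
lemma qint_succ (q : ℂ) (k : ℕ) : qint q (k + 1) = qint q k + q ^ k := by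
  simp [qint, Finset.sum_range_succ]
lemma qint_add (q : ℂ) (j k : ℕ) : qint q (j + k) = qint q j + q ^ j * qint q k := by
  induction k with
  | zero => simp [qint]
  | succ k ih => rw [← add_assoc, qint_succ, ih, qint_succ]; ring
lemma qint_mul (q : ℂ) (k : ℕ) : (1 - q) * qint q k = 1 - q ^ k := by
  induction k with
  | zero => simp [qint]
  | succ k ih => rw [qint_succ, mul_add, ih]; ring
lemma qfact_succ (q : ℂ) (k : ℕ) : qfact q (k + 1) = qfact q k * qint q (k + 1) := by
  simp [qfact, Finset.prod_range_succ]
lemma qfact_zero (q : ℂ) : qfact q 0 = 1 := by simp [qfact]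

/-- Basic summation lemma (q-Pascal). -/
lemma pascal {V : Type*} [AddCommGroup V] [Module ℂ V] (q : ℂ) (N : ℕ)
    (hne : qfact q (N + 1) ≠ 0) (h : ℕ → ℕ → V) :
    ∑ x ∈ antidiagonal (N + 1), (qint q (N + 1) / qfact q x.2) • h x.1 x.2 =
      ∑ x ∈ antidiagonal N, (1 / qfact q x.2) •
        (q ^ x.1 • h x.1 (x.2 + 1) + qint q (x.1 + 1) • h (x.1 + 1) x.2) := by
  have hk : ∀ k, k ≤ N → qint q (k + 1) ≠ 0 := by
    intro k hk
    exact Finset.prod_ne_zero_iff.mp hne k (mem_range.mpr (by omega))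
  have e1 : ∑ x ∈ antidiagonal (N + 1), (qint q (N + 1) / qfact q x.2) • h x.1 x.2 =
      ∑ x ∈ antidiagonal (N + 1), ((q ^ x.1 * qint q x.2) / qfact q x.2) • h x.1 x.2 +
      ∑ x ∈ antidiagonal (N + 1), (qint q x.1 / qfact q x.2) • h x.1 x.2 := by
    rw [← Finset.sum_add_distrib]
    refine Finset.sum_congr rfl fun x hx => ?_
    rw [HasAntidiagonal.mem_antidiagonal] at hx
    rw [← hx, qint_add, ← add_smul]
    congr 1; ring
  rw [e1, Finset.Nat.sum_antidiagonal_succ', Finset.Nat.sum_antidiagonal_succ (n := N)]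
  simp only [qint_zero, mul_zero, zero_div, zero_smul, zero_add]
  rw [← Finset.sum_add_distrib]
  refine Finset.sum_congr rfl fun x hx => ?_
  rw [HasAntidiagonal.mem_antidiagonal] at hx
  have := hk x.2 (by omega)
  rw [smul_add, smul_smul, smul_smul, qfact_succ]
  congr 2
  · field_simp
  · field_simp

lemma s_zpow (q : ℂ) (j : ℕ) (f : PolyZW) : sL q (zz ^ j * f) = q ^ j • (zz ^ j * sL q f) := by
  induction j generalizing f with
  | zero => simp
  | succ j ih => rw [pow_succ, mul_assoc, ih, s_z, mul_smul_comm, smul_smul, ← mul_assoc,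
      ← pow_succ, ← pow_succ]
lemma s_wpow (q : ℂ) (j : ℕ) (f : PolyZW) : sL q (ww ^ j * f) = ww ^ j * sL q f := by
  induction j generalizing f with
  | zero => simp
  | succ j ih => rw [pow_succ, mul_assoc, ih, s_w, ← mul_assoc]
lemma spow_wpow (q : ℂ) (i j : ℕ) (f : PolyZW) :
    (sL q ^ i) (ww ^ j * f) = ww ^ j * (sL q ^ i) f := by
  induction i with
  | zero => simp
  | succ i ih => rw [pow_succ', Module.End.mul_apply, Module.End.mul_apply, ih, s_wpow]
lemma Dz_wpow (q : ℂ) (j : ℕ) (f : PolyZW) : zL q (ww ^ j * f) = ww ^ j * zL q f := by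
  induction j generalizing f with
  | zero => simp
  | succ j ih => rw [pow_succ, mul_assoc, ih, Dz_w, ← mul_assoc]
lemma Dw_zpow (q : ℂ) (j : ℕ) (f : PolyZW) : wL q (zz ^ j * f) = zz ^ j * wL q f := by
  induction j generalizing f with
  | zero => simp
  | succ j ih => rw [pow_succ, mul_assoc, ih, Dw_z, ← mul_assoc]
lemma t_wpow (q : ℂ) (j : ℕ) (f : PolyZW) :
    tL q (ww ^ j * f) = q⁻¹ ^ j • (ww ^ j * tL q f) := by
  induction j generalizing f with
  | zero => simp
  | succ j ih => rw [pow_succ, mul_assoc, ih, t_w, mul_smul_comm, smul_smul, ← mul_assoc,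
      ← pow_succ, ← pow_succ]
lemma Dw_t (q : ℂ) (f : PolyZW) : wL q (tL q f) = q⁻¹ • tL q (wL q f) := by
  refine ext2 fun a b => ?_
  simp only [wL_coeff, smul_coeff2, tL_coeff]; ring
lemma Dwpow_t (q : ℂ) (j : ℕ) (f : PolyZW) :
    (wL q ^ j) (tL q f) = q⁻¹ ^ j • tL q ((wL q ^ j) f) := by
  induction j with
  | zero => simp
  | succ j ih =>
    rw [pow_succ', Module.End.mul_apply, Module.End.mul_apply, ih, map_smul, Dw_t, smul_smul,
      ← pow_succ]

/-- auxiliary coefficient `q^(j choose 2) (q-1)^j`. -/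
def ec (q : ℂ) (j : ℕ) : ℂ := ∏ i ∈ range j, (q ^ i * (q - 1))
lemma ec_succ (q : ℂ) (j : ℕ) : ec q (j + 1) = ec q j * (q ^ j * (q - 1)) := by
  simp [ec, Finset.prod_range_succ]

lemma qfact_ne_of_le (q : ℂ) {N k : ℕ} (h : k ≤ N) (hne : qfact q N ≠ 0) : qfact q k ≠ 0 := by
  unfold qfact at *
  rw [Finset.prod_ne_zero_iff] at *
  intro i hi
  exact hne i (by simp at *; omega)

lemma qint_ne_of_le (q : ℂ) {N k : ℕ} (h : k + 1 ≤ N) (hne : qfact q N ≠ 0) :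
    qint q (k + 1) ≠ 0 := by
  unfold qfact at *
  rw [Finset.prod_ne_zero_iff] at *
  exact hne k (by simp at *; omega)

lemma idA (q : ℂ) (h1 : 1 - q ≠ 0) (f : PolyZW) (N : ℕ) (hne : qfact q N ≠ 0) :
    ∑ x ∈ antidiagonal N, (1 / qfact q x.2) • (ec q x.1 / qfact q x.1) •
      (zz ^ x.1 * (zL q ^ x.1) f) = (1 / qfact q N) • (sL q ^ N) f := by
  induction N with
  | zero => simp [ec, qfact_zero]
  | succ N ih =>
    have hN : qint q (N + 1) ≠ 0 := qint_ne_of_le q le_rfl hne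
    have hp := pascal q N hne (fun j _ => (ec q j / qfact q j) • (zz ^ j * (zL q ^ j) f))
    have hstep : ∀ x ∈ antidiagonal N, (1 / qfact q x.2) •
        (q ^ x.1 • (ec q x.1 / qfact q x.1) • (zz ^ x.1 * (zL q ^ x.1) f) +
          qint q (x.1 + 1) • (ec q (x.1 + 1) / qfact q (x.1 + 1)) •
            (zz ^ (x.1 + 1) * (zL q ^ (x.1 + 1)) f)) =
        sL q ((1 / qfact q x.2) • (ec q x.1 / qfact q x.1) • (zz ^ x.1 * (zL q ^ x.1) f)) := by
      intro x hx
      rw [HasAntidiagonal.mem_antidiagonal] at hx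
      have hx1 : qint q (x.1 + 1) ≠ 0 := qint_ne_of_le q (by omega) hne
      rw [map_smul, map_smul, s_zpow]
      have hs : sL q ((zL q ^ x.1) f) =
          (zL q ^ x.1) f - (1 - q) • (zz * (zL q ^ (x.1 + 1)) f) := by
        rw [pow_succ', Module.End.mul_apply, z_Dz q h1]; abel
      rw [hs, mul_sub, mul_smul_comm, ← mul_assoc, ← pow_succ, ec_succ, qfact_succ]
      congr 1
      simp only [smul_smul, smul_sub]
      rw [sub_eq_add_neg (_ • _ : PolyZW), ← neg_smul]
      congr 2
      · ring
      · field_simp; ring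
    rw [Finset.sum_congr rfl hstep, ← map_sum, ih (qfact_ne_of_le q (by omega) hne)] at hp
    have : ∀ y : PolyZW, y = (1 / qint q (N + 1)) • qint q (N + 1) • y := by
      intro y; rw [smul_smul, one_div_mul_cancel hN, one_smul]
    rw [this (∑ x ∈ _, _), Finset.smul_sum]
    simp only [smul_smul] at hp ⊢
    have e : ∀ x : ℕ × ℕ, qint q (N + 1) / qfact q x.2 * (ec q x.1 / qfact q x.1) =
      qint q (N + 1) * (1 / qfact q x.2) * (ec q x.1 / qfact q x.1) := by intro x; ring
    simp only [e] at hp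
    simp only [← mul_assoc] at hp ⊢
    rw [hp, map_smul, smul_smul, pow_succ' (sL q), Module.End.mul_apply, qfact_succ]
    congr 1
    field_simp

lemma idB (q : ℂ) (h0 : q ≠ 0) (h1 : 1 - q⁻¹ ≠ 0) (f : PolyZW) (N : ℕ) (hne : qfact q N ≠ 0) :
    ∑ x ∈ antidiagonal N, (1 / qfact q x.2) • ((1 - q⁻¹) ^ x.1 / qfact q x.1) •
      (ww ^ x.1 * (wL q ^ x.1) ((tL q ^ x.2) f)) = (1 / qfact q N) • f := by
  induction N with
  | zero => simp [qfact_zero]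
  | succ N ih =>
    have hN : qint q (N + 1) ≠ 0 := qint_ne_of_le q le_rfl hne
    have hp := pascal q N hne (fun j k => ((1 - q⁻¹) ^ j / qfact q j) •
      (ww ^ j * (wL q ^ j) ((tL q ^ k) f)))
    have hstep : ∀ x ∈ antidiagonal N, (1 / qfact q x.2) •
        (q ^ x.1 • ((1 - q⁻¹) ^ x.1 / qfact q x.1) •
            (ww ^ x.1 * (wL q ^ x.1) ((tL q ^ (x.2 + 1)) f)) +
          qint q (x.1 + 1) • ((1 - q⁻¹) ^ (x.1 + 1) / qfact q (x.1 + 1)) •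
            (ww ^ (x.1 + 1) * (wL q ^ (x.1 + 1)) ((tL q ^ x.2) f))) =
        (1 / qfact q x.2) • ((1 - q⁻¹) ^ x.1 / qfact q x.1) •
            (ww ^ x.1 * (wL q ^ x.1) ((tL q ^ x.2) f)) := by
      intro x hx
      rw [HasAntidiagonal.mem_antidiagonal] at hx
      have hx1 : qint q (x.1 + 1) ≠ 0 := qint_ne_of_le q (by omega) hne
      rw [pow_succ' (tL q), Module.End.mul_apply, Dwpow_t]
      have hs : tL q ((wL q ^ x.1) ((tL q ^ x.2) f)) = (wL q ^ x.1) ((tL q ^ x.2) f)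
          - (1 - q⁻¹) • (ww * (wL q ^ (x.1 + 1)) ((tL q ^ x.2) f)) := by
        rw [pow_succ', Module.End.mul_apply, w_Dw q h1]; abel
      rw [hs, mul_smul_comm, mul_sub, mul_smul_comm, ← mul_assoc, ← pow_succ, qfact_succ]
      congr 1
      simp only [smul_smul, smul_sub]
      have e1 : q ^ x.1 * ((1 - q⁻¹) ^ x.1 / qfact q x.1) * q⁻¹ ^ x.1 =
        (1 - q⁻¹) ^ x.1 / qfact q x.1 := by
        have : q ^ x.1 * q⁻¹ ^ x.1 = 1 := by rw [← mul_pow, mul_inv_cancel₀ h0, one_pow]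
        linear_combination ((1 - q⁻¹) ^ x.1 / qfact q x.1) * this
      simp only [← mul_assoc]
      have e2 : qint q (x.1 + 1) * ((1 - q⁻¹) ^ (x.1 + 1) / (qfact q x.1 * qint q (x.1 + 1))) =
         (1 - q⁻¹) ^ x.1 / qfact q x.1 * (1 - q⁻¹) := by
        rw [pow_succ]
        generalize 1 - q⁻¹ = p
        field_simp
      rw [e2]
      simp only [e1]
      abel
    rw [Finset.sum_congr rfl hstep, ih (qfact_ne_of_le q (by omega) hne)] at hp
    have : ∀ y : PolyZW, y = (1 / qint q (N + 1)) • qint q (N + 1) • y := by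
      intro y; rw [smul_smul, one_div_mul_cancel hN, one_smul]
    rw [this (∑ x ∈ _, _), Finset.smul_sum]
    have e : ∀ x : ℕ × ℕ, qint q (N + 1) / qfact q x.2 =
      qint q (N + 1) * (1 / qfact q x.2) := by intro x; ring
    simp only [e, mul_smul] at hp
    rw [hp, smul_smul, qfact_succ]
    congr 1
    field_simp

lemma tri {V : Type*} [AddCommMonoid V] (n : ℕ) (f : ℕ → ℕ → V)
    (hz : ∀ j < n, ∀ k < n, n ≤ j + k → f j k = 0) :
    ∑ j ∈ range n, ∑ k ∈ range n, f j k = ∑ N ∈ range n, ∑ x ∈ antidiagonal N, f x.1 x.2 := by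
  simp only [Finset.Nat.sum_antidiagonal_eq_sum_range_succ_mk]
  rw [Finset.sum_range_diag_flip n f]
  refine Finset.sum_congr rfl fun j hj => ?_
  symm
  refine Finset.sum_subset (Finset.range_mono (by omega)) fun k hk hk' => ?_
  simp at *
  exact hz j hj k hk (by omega)

lemma sum_zmod {V : Type*} [AddCommMonoid V] (n : ℕ) [NeZero n] (f : ℕ → V) :
    ∑ k ∈ range n, f k = ∑ x : ZMod n, f x.val := by
  symm
  refine Finset.sum_bij (fun x _ => x.val) ?_ ?_ ?_ ?_
  · intro x _; exact mem_range.mpr (ZMod.val_lt x)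
  · intro x _ y _ h; exact ZMod.val_injective n h
  · intro k hk; exact ⟨(k : ZMod n), mem_univ _, ZMod.val_cast_of_lt (mem_range.mp hk)⟩
  · intro x _; rfl

lemma qstar_eq (n : ℕ) (hbar q : ℂ) (F G : ZMod n → PolyZW) (m : ZMod n) :
    qstar n hbar q F G m = ∑ j ∈ range n, ∑ k ∈ range n,
      ((Complex.I * hbar / 2) ^ j / qfact q j) •
        ((zL q ^ j) (F (k : ZMod n)) * (sL q ^ j) ((wL q ^ j) (((sL q * tL q) ^ k)
            (G (m - (k : ZMod n) - (j : ZMod n)))))) := by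
  unfold qstar
  simp only [s_it, w_it, z_it, g_it]
  

lemma w_smul_cancel {c : ℂ} (hc : c ≠ 0) (j : ℕ) {f g : PolyZW}
    (h : c • (ww ^ j * f) = c • (ww ^ j * g)) : f = g := by
  have h2 := smul_right_injective PolyZW hc h
  exact mul_left_cancel₀ (pow_ne_zero j w_ne) h2

section rev
variable (n : ℕ) (q t : ℂ) (F : ZMod n → PolyZW)

lemma R2 (h1 : 1 - q ≠ 0) (h1' : 1 - q⁻¹ ≠ 0)
    (hR1 : ∀ m : ℕ, t • zL q (F m) = (qint q (m + 1) * (1 - q⁻¹)) • (ww * F ((m + 1 : ℕ))))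
    (hg : ∀ x, (sL q * tL q) (F x) = F x) (m : ℕ) :
    t • sL q (wL q (F m)) = (qint q (m + 1) * (q - 1)) • (zz * F ((m + 1 : ℕ))) := by
  apply w_smul_cancel h1' 1
  rw [pow_one]
  have e1 : (1 - q⁻¹) • (ww * sL q (wL q (F m))) = sL q (F m) - F m := by
    rw [← s_w, ← map_smul, w_Dw q h1', map_sub]
    have := hg m
    rw [Module.End.mul_apply] at this
    rw [this]
  have e2 : sL q (F m) - F m = (q - 1) • (zz * zL q (F m)) := by
    have := z_Dz q h1 (F m)
    rw [← neg_sub, ← this, ← neg_smul, neg_sub]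
  rw [mul_smul_comm, smul_comm, e1, e2, smul_comm, ← mul_smul_comm, hR1, mul_smul_comm,
    mul_smul_comm, smul_smul, smul_smul, mul_left_comm ww zz]
  congr 1; ring

lemma P1 
    (hR1 : ∀ m : ℕ, t • zL q (F m) = (qint q (m + 1) * (1 - q⁻¹)) • (ww * F ((m + 1 : ℕ))))
    (k j : ℕ) : (qfact q k * t ^ j) • (zL q ^ j) (F k) =
      (qfact q (k + j) * (1 - q⁻¹) ^ j) • (ww ^ j * F ((k + j : ℕ))) := by
  induction j with
  | zero => simp
  | succ j ih =>
    rw [pow_succ' (zL q), Module.End.mul_apply, pow_succ, ← mul_assoc, mul_comm _ t, mul_smul,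
      ← map_smul, ih, map_smul, Dz_wpow, smul_comm, ← mul_smul_comm, hR1, mul_smul_comm, smul_smul,
      ← mul_assoc (ww ^ j) ww, ← pow_succ, ← add_assoc, qfact_succ]
    congr 1; ring

lemma P2 
    (hR2 : ∀ m : ℕ, t • sL q (wL q (F m)) = (qint q (m + 1) * (q - 1)) • (zz * F ((m + 1 : ℕ))))
    (k j : ℕ) : (qfact q k * t ^ j) • (sL q ^ j) ((wL q ^ j) (F k)) =
      (qfact q (k + j) * ec q j) • (zz ^ j * F ((k + j : ℕ))) := by
  rw [← Module.End.mul_apply, ← (comm_sw q).mul_pow]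
  induction j with
  | zero => simp [ec]
  | succ j ih =>
    rw [pow_succ' (sL q * wL q), Module.End.mul_apply, pow_succ, ← mul_assoc, mul_comm _ t,
      mul_smul, ← map_smul, ih, map_smul, Module.End.mul_apply, Dw_zpow, s_zpow, smul_comm,
      smul_comm t, ← mul_smul_comm, hR2, mul_smul_comm, smul_smul, smul_smul,
      ← mul_assoc (zz ^ j) zz, ← pow_succ, ← add_assoc, qfact_succ, ec_succ]
    congr 1; ring

lemma qfact_zero_of_ge (hz : qint q n = 0) (hn : 1 ≤ n) (N : ℕ) (h : n ≤ N) : qfact q N = 0 := by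
  unfold qfact
  refine Finset.prod_eq_zero (mem_range.mpr (by omega : n - 1 < N)) ?_
  rw [Nat.sub_add_cancel hn, hz]

lemma star_left (hn : 1 ≤ n) (h0 : q ≠ 0) (h1' : 1 - q⁻¹ ≠ 0) (hz : qint q n = 0)
    (hf : ∀ j < n, qfact q j ≠ 0)
    (hP : ∀ k j : ℕ, (qfact q k * t ^ j) • (zL q ^ j) (F k) =
      (qfact q (k + j) * (1 - q⁻¹) ^ j) • (ww ^ j * F ((k + j : ℕ))))
    (G : ZMod n → PolyZW) (m : ZMod n) :
    ∑ j ∈ range n, ∑ k ∈ range n,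
      (t ^ j / qfact q j) •
        ((zL q ^ j) (F (k : ZMod n)) * (sL q ^ j) ((wL q ^ j) (((sL q * tL q) ^ k)
            (G (m - (k : ZMod n) - (j : ZMod n)))))) =
    ∑ N ∈ range n, F N * (sL q ^ N) (G (m - (N : ℕ))) := by
  have hP' : ∀ k < n, ∀ j, t ^ j • (zL q ^ j) (F k) =
      (qfact q (k + j) * (1 - q⁻¹) ^ j / qfact q k) • (ww ^ j * F ((k + j : ℕ))) := by
    intro k hk j
    have hk0 := hf k hk
    apply smul_right_injective PolyZW hk0
    simp only
    rw [smul_smul, hP, smul_smul, mul_div_cancel₀ _ hk0]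
  have hcomm : ∀ j k (g : PolyZW), (sL q ^ j) ((wL q ^ j) (((sL q * tL q) ^ k) g)) =
      (sL q ^ (k + j)) ((wL q ^ j) ((tL q ^ k) g)) := by
    intro j k g
    rw [(comm_st q).mul_pow, Module.End.mul_apply, ← Module.End.mul_apply (wL q ^ j) (sL q ^ k),
      ← ((comm_sw q).pow_pow k j).eq, Module.End.mul_apply,
      ← Module.End.mul_apply (sL q ^ j) (sL q ^ k), ← pow_add, add_comm j k]
  have hterm : ∀ j, ∀ k < n, (t ^ j / qfact q j) •
        ((zL q ^ j) (F (k : ZMod n)) * (sL q ^ j) ((wL q ^ j) (((sL q * tL q) ^ k)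
            (G (m - (k : ZMod n) - (j : ZMod n)))))) =
      (qfact q (k + j) * ((1 / qfact q k) * ((1 - q⁻¹) ^ j / qfact q j))) •
        (F ((k + j : ℕ)) * (sL q ^ (k + j)) (ww ^ j * (wL q ^ j) ((tL q ^ k)
          (G (m - ((k + j : ℕ) : ZMod n)))))) := by
    intro j k hk
    rw [hcomm, div_eq_inv_mul, mul_smul, ← smul_mul_assoc, hP' k hk j, smul_mul_assoc, smul_smul,
      spow_wpow, Nat.cast_add, ← sub_sub]
    rw [mul_comm (ww ^ j) (F _), mul_assoc (F _)]
    congr 1; ring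
  rw [tri n _ (by
    intro j hj k hk h
    rw [hterm j k hk, qfact_zero_of_ge n q hz hn (k + j) (by omega)]; simp)]
  refine Finset.sum_congr rfl fun N hN => ?_
  rw [mem_range] at hN
  have hN0 := hf N hN
  have : ∀ x ∈ antidiagonal N, (t ^ x.1 / qfact q x.1) •
        ((zL q ^ x.1) (F (x.2 : ZMod n)) * (sL q ^ x.1) ((wL q ^ x.1) (((sL q * tL q) ^ x.2)
            (G (m - (x.2 : ZMod n) - (x.1 : ZMod n)))))) =
      qfact q N • (F N * (sL q ^ N) ((1 / qfact q x.2) • ((1 - q⁻¹) ^ x.1 / qfact q x.1) •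
      (ww ^ x.1 * (wL q ^ x.1) ((tL q ^ x.2) (G (m - (N : ℕ))))))) := by
    intro x hx
    rw [HasAntidiagonal.mem_antidiagonal] at hx
    rw [hterm x.1 x.2 (by omega), show x.2 + x.1 = N by omega, map_smul, map_smul, mul_smul_comm,
      mul_smul_comm, smul_smul, smul_smul]
    congr 1; ring
  rw [Finset.sum_congr rfl this, ← Finset.smul_sum, ← Finset.mul_sum, ← map_sum,
    idB q h0 h1' _ N hN0, map_smul, mul_smul_comm, smul_smul, mul_one_div_cancel hN0, one_smul]

lemma star_right [NeZero n] (hn : 1 ≤ n) (h1 : 1 - q ≠ 0) (hz : qint q n = 0)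
    (hf : ∀ j < n, qfact q j ≠ 0)
    (hg : ∀ x, (sL q * tL q) (F x) = F x)
    (hP : ∀ k j : ℕ, (qfact q k * t ^ j) • (sL q ^ j) ((wL q ^ j) (F k)) =
      (qfact q (k + j) * ec q j) • (zz ^ j * F ((k + j : ℕ))))
    (G : ZMod n → PolyZW) (m : ZMod n) :
    ∑ j ∈ range n, ∑ k ∈ range n,
      (t ^ j / qfact q j) •
        ((zL q ^ j) (G (k : ZMod n)) * (sL q ^ j) ((wL q ^ j) (((sL q * tL q) ^ k)
            (F (m - (k : ZMod n) - (j : ZMod n)))))) =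
    ∑ N ∈ range n, F N * (sL q ^ N) (G (m - (N : ℕ))) := by
  have hgk : ∀ k x, ((sL q * tL q) ^ k) (F x) = F x := by
    intro k x
    induction k with
    | zero => simp
    | succ k ih => rw [pow_succ, Module.End.mul_apply, hg, ih]
  simp only [hgk]
  have hre : ∀ j ∈ range n, ∑ k ∈ range n,
      (t ^ j / qfact q j) • ((zL q ^ j) (G (k : ZMod n)) * (sL q ^ j) ((wL q ^ j)
            (F (m - (k : ZMod n) - (j : ZMod n))))) =
      ∑ k ∈ range n, (t ^ j / qfact q j) • ((zL q ^ j) (G (m - ((k + j : ℕ) : ZMod n))) *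
        (sL q ^ j) ((wL q ^ j) (F (k : ZMod n)))) := by
    intro j _
    rw [sum_zmod n, sum_zmod n]
    rw [← (Equiv.subLeft (m - (j : ZMod n))).sum_comp]
    refine Finset.sum_congr rfl fun x _ => ?_
    have e1 : m - (m - (j : ZMod n) - x) - j = x := by ring
    have e2 : m - (j : ZMod n) - x = m - (x + j) := by ring
    simp only [Equiv.subLeft_apply, ZMod.natCast_val, ZMod.cast_id, Nat.cast_add, e1]
    rw [e2]
  rw [Finset.sum_congr rfl hre]
  have hterm : ∀ j, ∀ k < n, (t ^ j / qfact q j) •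
      ((zL q ^ j) (G (m - ((k + j : ℕ) : ZMod n))) * (sL q ^ j) ((wL q ^ j) (F (k : ZMod n)))) =
      (qfact q (k + j) * ((1 / qfact q k) * (ec q j / qfact q j))) •
        (F ((k + j : ℕ)) * (zz ^ j * (zL q ^ j) (G (m - ((k + j : ℕ) : ZMod n))))) := by
    intro j k hk
    have hk0 := hf k hk
    have hP' : t ^ j • (sL q ^ j) ((wL q ^ j) (F k)) =
        (qfact q (k + j) * ec q j / qfact q k) • (zz ^ j * F ((k + j : ℕ))) := by
      apply smul_right_injective PolyZW hk0
      simp only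
      rw [smul_smul, hP, smul_smul, mul_div_cancel₀ _ hk0]
    rw [div_eq_inv_mul, mul_smul, ← mul_smul_comm, hP', mul_smul_comm, smul_smul]
    rw [← mul_assoc, mul_comm _ (F _), mul_comm (zz ^ j)]
    congr 1; ring
  rw [tri n _ (by
    intro j hj k hk h
    rw [hterm j k hk, qfact_zero_of_ge n q hz hn (k + j) (by omega)]; simp)]
  refine Finset.sum_congr rfl fun N hN => ?_
  rw [mem_range] at hN
  have hN0 := hf N hN
  have : ∀ x ∈ antidiagonal N, (t ^ x.1 / qfact q x.1) •
      ((zL q ^ x.1) (G (m - ((x.2 + x.1 : ℕ) : ZMod n))) *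
        (sL q ^ x.1) ((wL q ^ x.1) (F (x.2 : ZMod n)))) =
      qfact q N • (F N * ((1 / qfact q x.2) • (ec q x.1 / qfact q x.1) •
      (zz ^ x.1 * (zL q ^ x.1) (G (m - (N : ℕ)))))) := by
    intro x hx
    rw [HasAntidiagonal.mem_antidiagonal] at hx
    rw [hterm x.1 x.2 (by omega), show x.2 + x.1 = N by omega, mul_smul_comm,
      mul_smul_comm, smul_smul, smul_smul]
    congr 1; ring
  rw [Finset.sum_congr rfl this, ← Finset.smul_sum, ← Finset.mul_sum,
    idA q h1 _ N hN0, mul_smul_comm, smul_smul, mul_one_div_cancel hN0, one_smul]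

lemma qint_mod (h1 : 1 - q ≠ 0) (hqn : q ^ n = 1) (m : ℕ) :
    qint q (m + 1) = qint q (m % n + 1) := by
  apply mul_left_cancel₀ h1
  rw [qint_mul, qint_mul, pow_succ, pow_succ]
  conv_lhs => rw [← Nat.div_add_mod m n, pow_add, pow_mul, hqn, one_pow, one_mul]

/-- recurrences from the hypotheses -/
lemma recur (hn : 1 ≤ n) (h0 : q ≠ 0) (h1 : 1 - q ≠ 0) (h1' : 1 - q⁻¹ ≠ 0) (hqn : q ^ n = 1)
    (hz : qint q n = 0) (hf : ∀ j < n, qfact q j ≠ 0)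
    (hg0 : (sL q * tL q) (F 0) = F 0)
    (hH : ∀ j : ℕ, 1 ≤ j → j ≤ n - 1 → (qfact q j * (1 - q⁻¹) ^ j) • (ww ^ j * F (j : ZMod n)) =
            t ^ j • (zL q ^ j) (F 0)) :
    (∀ m : ℕ, t • zL q (F m) = (qint q (m + 1) * (1 - q⁻¹)) • (ww * F ((m + 1 : ℕ)))) ∧
    (∀ x, (sL q * tL q) (F x) = F x) := by
  have : NeZero n := ⟨by omega⟩
  have hH' : ∀ j : ℕ, j ≤ n → (qfact q j * (1 - q⁻¹) ^ j) • (ww ^ j * F (j : ZMod n)) =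
            t ^ j • (zL q ^ j) (F 0) := by
    intro j hj
    rcases Nat.eq_zero_or_pos j with rfl | hj0
    · simp [qfact_zero]
    rcases Nat.lt_or_ge j n with h | h
    · exact hH j hj0 (by omega)
    · have : j = n := by omega
      subst this
      rw [qfact_zero_of_ge j q hz hn j le_rfl, Dz_pow_zero q j hn hqn]; simp
  have hc : ∀ m < n, qfact q m * (1 - q⁻¹) ^ m ≠ 0 := fun m hm =>
    mul_ne_zero (hf m hm) (pow_ne_zero _ h1')
  constructor
  · have key : ∀ m < n, t • zL q (F (m : ℕ)) =
        (qint q (m + 1) * (1 - q⁻¹)) • (ww * F ((m + 1 : ℕ))) := by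
      intro m hm
      apply w_smul_cancel (hc m hm) m
      rw [mul_smul_comm, smul_comm, ← Dz_wpow, ← map_smul, hH' m hm.le, map_smul,
        ← Module.End.mul_apply, ← pow_succ', smul_smul, ← pow_succ', ← hH' (m + 1) hm,
        mul_smul_comm, smul_smul, ← mul_assoc (ww ^ m), ← pow_succ, qfact_succ]
      congr 1; ring
    intro m
    have := key (m % n) (Nat.mod_lt _ hn)
    rw [qint_mod n q h1 hqn m]
    push_cast at this ⊢
    rwa [ZMod.natCast_mod] at this
  · have hgD : ∀ j, (sL q * tL q) ((zL q ^ j) (F 0)) = q⁻¹ ^ j • (zL q ^ j) (F 0) := by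
      intro j
      induction j with
      | zero => simpa using hg0
      | succ j ih =>
        have : ∀ f, (sL q * tL q) (zL q f) = q⁻¹ • zL q ((sL q * tL q) f) := by
          intro f
          have h2 : tL q (zL q f) = zL q (tL q f) := by
            rw [← Module.End.mul_apply, (comm_tz q).eq, Module.End.mul_apply]
          rw [Module.End.mul_apply, Module.End.mul_apply, h2, ← s_Dz, smul_smul,
            inv_mul_cancel₀ h0, one_smul]
        rw [pow_succ' (zL q), Module.End.mul_apply (zL q), this, ih, map_smul, smul_smul,
          ← pow_succ']
    intro x
    obtain ⟨m, hm, rfl⟩ : ∃ m < n, (m : ZMod n) = x := ⟨x.val, ZMod.val_lt x, by simp⟩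
    have h3 := congrArg (sL q * tL q) (hH' m hm.le)
    rw [map_smul, map_smul, hgD, smul_comm (t ^ m), ← hH' m hm.le, Module.End.mul_apply, t_wpow,
      map_smul, s_wpow, smul_comm _ (q⁻¹ ^ m)] at h3
    have h4 := smul_right_injective PolyZW (pow_ne_zero m (inv_ne_zero h0)) h3
    rw [Module.End.mul_apply]
    exact w_smul_cancel (hc m hm) m h4
end rev

lemma star_single_right (n : ℕ) [NeZero n] (hbar q : ℂ) (F : ZMod n → PolyZW) (l m : ZMod n)
    (g : PolyZW) :
    qstar n hbar q F (Pi.single l g) m = ∑ j ∈ range n,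
      ((Complex.I * hbar / 2) ^ j / qfact q j) •
        ((zL q ^ j) (F (m - l - j)) * (sL q ^ j) ((wL q ^ j) (((sL q * tL q) ^ (m - l - j).val)
            g))) := by
  rw [qstar_eq]
  refine Finset.sum_congr rfl fun j _ => ?_
  rw [sum_zmod n, Fintype.sum_eq_single (m - l - j)]
  · simp only [ZMod.natCast_val, ZMod.cast_id]
    rw [show m - (m - l - (j : ZMod n)) - j = l by ring, Pi.single_eq_same]
  · intro x hx
    simp only [ZMod.natCast_val, ZMod.cast_id]
    rw [Pi.single_eq_of_ne]
    · simp
    · intro h; apply hx; rw [← h]; ring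

lemma star_single_left (n : ℕ) [NeZero n] (hbar q : ℂ) (F : ZMod n → PolyZW) (l m : ZMod n)
    (g : PolyZW) :
    qstar n hbar q (Pi.single l g) F m = ∑ j ∈ range n,
      ((Complex.I * hbar / 2) ^ j / qfact q j) •
        ((zL q ^ j) g * (sL q ^ j) ((wL q ^ j) (((sL q * tL q) ^ l.val)
            (F (m - l - j))))) := by
  rw [qstar_eq]
  refine Finset.sum_congr rfl fun j _ => ?_
  rw [sum_zmod n, Fintype.sum_eq_single l]
  · simp only [ZMod.natCast_val, ZMod.cast_id]
    rw [Pi.single_eq_same]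
  · intro x hx
    simp only [ZMod.natCast_val, ZMod.cast_id]
    rw [Pi.single_eq_of_ne hx]
    simp

lemma one_c (a b : ℕ) : ((1 : PolyZW).coeff a).coeff b = if a = 0 ∧ b = 0 then 1 else 0 := by
  rw [coeff_one]
  split_ifs with h h2 h2 <;> simp_all [coeff_one]

lemma zL_one (q : ℂ) : zL q 1 = 0 := by
  refine ext2 fun a b => ?_
  rw [zL_coeff, one_c]; simp
lemma wL_one (q : ℂ) : wL q 1 = 0 := by
  refine ext2 fun a b => ?_
  rw [wL_coeff, one_c]; simp
lemma sL_one (q : ℂ) : sL q 1 = 1 := by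
  refine ext2 fun a b => ?_
  rw [sL_coeff, one_c]; split_ifs with h <;> simp [h]
lemma tL_one (q : ℂ) : tL q 1 = 1 := by
  refine ext2 fun a b => ?_
  rw [tL_coeff, one_c]; split_ifs with h <;> simp [h]
lemma gk_one (q : ℂ) (k : ℕ) : ((sL q * tL q) ^ k) 1 = 1 := by
  induction k with
  | zero => simp
  | succ k ih => rw [pow_succ, Module.End.mul_apply, Module.End.mul_apply, tL_one, sL_one, ih]
lemma gk_w (q : ℂ) (k : ℕ) : ((sL q * tL q) ^ k) ww = q⁻¹ ^ k • ww := by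
  have h : (sL q * tL q) ww = q⁻¹ • ww := by
    have := t_w q 1
    rw [mul_one, tL_one, mul_one] at this
    have h2 := s_w q 1
    rw [mul_one, sL_one, mul_one] at h2
    rw [Module.End.mul_apply, this, map_smul, h2]
  induction k with
  | zero => simp
  | succ k ih => rw [pow_succ', Module.End.mul_apply, ih, map_smul, h, smul_smul, ← pow_succ]
lemma zL_w (q : ℂ) : zL q ww = 0 := by
  have := Dz_w q 1
  rw [mul_one, zL_one, mul_zero] at this
  exact this
lemma wL_w (q : ℂ) (h1' : 1 - q⁻¹ ≠ 0) : wL q ww = 1 := by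
  refine ext2 fun a b => ?_
  have := w_coeff_succ 1 a b
  rw [mul_one] at this
  rw [wL_coeff, this, one_c]
  split_ifs with h
  · rw [h.2]; simp; exact inv_mul_cancel₀ h1'
  · simp

lemma forward (n : ℕ) (hn : 2 ≤ n) (hbar q : ℂ) (h0 : q ≠ 0) (h1' : 1 - q⁻¹ ≠ 0)
    (F : ZMod n → PolyZW)
    (hF : ∀ G : ZMod n → PolyZW, qstar n hbar q F G = qstar n hbar q G F) :
    (sL q * tL q) (F 0) = F 0 ∧
    ∀ j : ℕ, j ≤ n - 1 → (qfact q j * (1 - q⁻¹) ^ j) • (ww ^ j * F (j : ZMod n)) =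
            (Complex.I * hbar / 2) ^ j • (zL q ^ j) (F 0) := by
  obtain ⟨N, rfl⟩ : ∃ N, n = N + 2 := ⟨n - 2, by omega⟩
  constructor
  · have h := congrFun (hF (Pi.single 1 1)) 1
    rw [star_single_right, star_single_left, Finset.sum_range_succ',
      Finset.sum_range_succ' _ (N + 1)] at h
    rw [Finset.sum_eq_zero, Finset.sum_eq_zero] at h
    · have hv : (1 : ZMod (N + 2)).val = 1 := by
        rw [ZMod.val_one_eq_one_mod, Nat.mod_eq_of_lt (by omega)]
      simp only [gk_one, hv] at h
      simpa [qfact_zero] using h.symm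
    · intro j _
      rw [pow_succ (zL q), Module.End.mul_apply, zL_one]; simp
    · intro j _
      rw [gk_one, pow_succ (wL q), Module.End.mul_apply, wL_one]; simp
  · have key : ∀ m, m + 1 ≤ N + 1 → (Complex.I * hbar / 2) • zL q (F (m : ℕ)) =
        (qint q (m + 1) * (1 - q⁻¹)) • (ww * F ((m + 1 : ℕ))) := by
      intro m hm
      have h := congrFun (hF (Pi.single 0 ww)) ((m + 1 : ℕ))
      rw [star_single_right, star_single_left, Finset.sum_range_succ', Finset.sum_range_succ',
        Finset.sum_range_succ' _ (N + 1)] at h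
      rw [Finset.sum_eq_zero, Finset.sum_eq_zero] at h
      · have hv1 : ((m + 1 : ℕ) : ZMod (N + 2)).val = m + 1 := ZMod.val_cast_of_lt (by omega)
        have hv0 : ((m : ℕ) : ZMod (N + 2)).val = m := ZMod.val_cast_of_lt (by omega)
        have es : ((m + 1 : ℕ) : ZMod (N + 2)) - 0 - ((0 + 1 : ℕ) : ZMod (N + 2)) = (m : ℕ) := by
          push_cast; ring
        have es0 : ((m + 1 : ℕ) : ZMod (N + 2)) - 0 - ((0 : ℕ) : ZMod (N + 2)) = (m + 1 : ℕ) := by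
          push_cast; ring
        rw [es, es0, hv0, hv1, gk_w, gk_w] at h
        simp only [zero_add, pow_zero, pow_one, map_smul, wL_w q h1', sL_one, Module.End.one_apply,
          ZMod.val_zero, qfact_zero, div_one, one_smul] at h
        have hf1 : qfact q 1 = 1 := by simp [qfact, qint]
        rw [hf1, div_one, mul_smul_comm, mul_one, mul_smul_comm] at h
        have h5 : q⁻¹ ^ m • ((Complex.I * hbar / 2) • zL q (F (m : ℕ))) =
          (1 - q⁻¹ ^ (m + 1)) • (ww * F ((m + 1 : ℕ))) := by
          rw [mul_comm ww] at h ⊢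
          rw [sub_smul, one_smul, smul_comm, eq_sub_iff_add_eq, h]
        apply smul_right_injective PolyZW (pow_ne_zero m (inv_ne_zero h0))
        simp only
        rw [h5, smul_smul]
        congr 1
        have h6 := qint_mul q (m + 1)
        have h7 : q⁻¹ ^ m * q ^ m = 1 := by rw [← mul_pow, inv_mul_cancel₀ h0, one_pow]
        have h8 : q⁻¹ * q = 1 := inv_mul_cancel₀ h0
        have h9 : (1 - q⁻¹) = -(q⁻¹) * (1 - q) := by linear_combination -h8
        rw [h9, pow_succ]
        rw [pow_succ] at h6
        linear_combination (q⁻¹ ^ m * q⁻¹) * h6 - q⁻¹ * q * h7 - h8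
      · intro j _
        rw [pow_succ (zL q), Module.End.mul_apply, zL_w]; simp
      · intro j _
        rw [gk_w, pow_succ (wL q), Module.End.mul_apply, pow_succ (wL q), Module.End.mul_apply,
          map_smul, wL_w q h1', map_smul, wL_one]; simp
    intro j
    induction j with
    | zero => intro _; simp [qfact_zero]
    | succ j ih =>
      intro hj
      rw [pow_succ' (zL q), Module.End.mul_apply, pow_succ' (Complex.I * hbar / 2),
        mul_smul (Complex.I * hbar / 2),
        ← map_smul, ← ih (by omega), map_smul, Dz_wpow, smul_comm _ (qfact q j * _),
        ← mul_smul_comm (Complex.I * hbar / 2), key j (by omega), mul_smul_comm, smul_smul, ← mul_assoc (ww ^ j) ww, ← pow_succ, qfact_succ]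
      congr 1; ring

end QStarAux

/-- For `n ≥ 2`, `q = exp(2πi/n)` and `ℏ ∈ ℂ`, an element `F` of the crossed product is central
(`F ⋆ G = G ⋆ F` for all `G`) if and only if `γ(F(0)) = F(0)` and, for every `1 ≤ j ≤ n-1`,
`[j]_q! (1-q⁻¹)^j w^j F(j) = (iℏ/2)^j D_z^j(F(0))`. In particular a central element is
completely determined by its `γ`-invariant component `F(0)`. -/
theorem qstar_central_iff (n : ℕ) (hn : 2 ≤ n) (q : ℂ)
    (hq : q = Complex.exp (2 * Real.pi * Complex.I / n)) (hbar : ℂ)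
    (F : ZMod n → PolyZW) :
    (∀ G : ZMod n → PolyZW, qstar n hbar q F G = qstar n hbar q G F) ↔
      (gammaOp q (F 0) = F 0 ∧
        ∀ j : ℕ, 1 ≤ j → j ≤ n - 1 →
          (qfact q j * (1 - q⁻¹) ^ j) •
              (Polynomial.C ((Polynomial.X : Polynomial ℂ) ^ j) * F (j : ZMod n)) =
            ((Complex.I * hbar / 2) ^ j) • (Dz q)^[j] (F 0)) := by
  have hprim : IsPrimitiveRoot q n := by
    rw [hq]; exact Complex.isPrimitiveRoot_exp n (by omega)
  have : NeZero n := ⟨by omega⟩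
  have hqn : q ^ n = 1 := hprim.pow_eq_one
  have h0 : q ≠ 0 := hprim.ne_zero (by omega)
  have hq1 : q ≠ 1 := hprim.ne_one (by omega)
  have h1 : 1 - q ≠ 0 := sub_ne_zero.mpr (Ne.symm hq1)
  have h1' : 1 - q⁻¹ ≠ 0 := by
    rw [sub_ne_zero]; intro h; exact hq1 (inv_eq_one.mp h.symm)
  have hz : qint q n = 0 := by
    have := QStarAux.qint_mul q n
    rw [hqn, sub_self] at this
    exact (mul_eq_zero.mp this).resolve_left h1
  have hf : ∀ j < n, qfact q j ≠ 0 := by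
    intro j hj
    unfold qfact
    rw [Finset.prod_ne_zero_iff]
    intro i hi h
    rw [Finset.mem_range] at hi
    have h2 := QStarAux.qint_mul q (i + 1)
    rw [h, mul_zero] at h2
    exact hprim.pow_ne_one_of_pos_of_lt (by omega) (by omega : i + 1 < n) (sub_eq_zero.mp h2.symm).symm
  have hCX : ∀ j : ℕ, Polynomial.C ((Polynomial.X : Polynomial ℂ) ^ j) = QStarAux.ww ^ j := by
    intro j; rw [Polynomial.C_pow]; rfl
  simp only [hCX, QStarAux.z_it]
  constructor
  · intro hF
    obtain ⟨hg, hH⟩ := QStarAux.forward n hn hbar q h0 h1' F hF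
    exact ⟨hg, fun j _ hj => hH j hj⟩
  · rintro ⟨hg, hH⟩ G
    obtain ⟨hR1, hgam⟩ := QStarAux.recur n q (Complex.I * hbar / 2) F (by omega) h0 h1 h1' hqn hz hf
      hg hH
    funext m
    rw [QStarAux.qstar_eq, QStarAux.qstar_eq,
      QStarAux.star_left n q _ F (by omega) h0 h1' hz hf (QStarAux.P1 n q _ F hR1) G m,
      QStarAux.star_right n q _ F (by omega) h1 hz hf hgam
        (QStarAux.P2 n q _ F (QStarAux.R2 n q _ F h1 h1' hR1 hgam)) G m]
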